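/- For every p ∈ (1,∞) and every d ∈ ℤ, σ_p^p(d) ≤ |d|·σ_p^p(1). -/

import Mathlib

open MeasureTheory Filter
open scoped ENNReal

noncomputable section

/-- Arc-length measure on the unit circle, realized as a measure on ℂ:
the pushforward of Lebesgue measure on `[0, 2π)` under `θ ↦ exp (θ i)`. -/
def circleMeasure : Measure ℂ :=
  Measure.map (fun θ : ℝ => Complex.exp (θ * Complex.I))
    (volume.restrict (Set.Ico 0 (2 * Real.pi)))

/-- The unit circle `S¹ ⊆ ℂ`. -/
def unitCircle : Set ℂ := Metric.sphere (0 : ℂ) 1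

/-- Gagliardo `p`-energy of `f` over a subset `A ⊆ S¹ × S¹`. -/
def gEnergyOn (p : ℝ) (f : ℂ → ℂ) (A : Set (ℂ × ℂ)) : ℝ≥0∞ :=
  ∫⁻ q in A, ENNReal.ofReal (‖f q.1 - f q.2‖ ^ p / ‖q.1 - q.2‖ ^ 2)
    ∂(circleMeasure.prod circleMeasure)

/-- Total Gagliardo `p`-energy `|f|_{W^{1/p,p}}^p` (as an extended real). -/
def gEnergy (p : ℝ) (f : ℂ → ℂ) : ℝ≥0∞ := gEnergyOn p f Set.univ

/-- The Gagliardo seminorm `|f|_{W^{1/p,p}}`. -/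
def gSeminorm (p : ℝ) (f : ℂ → ℂ) : ℝ := (gEnergy p f).toReal ^ (1 / p)

/-- A continuous map `g : S¹ → S¹` has (winding) degree `d`: it lifts to a
continuous `φ : [0, 2π] → ℝ` with `g (e^{iθ}) = e^{iφ(θ)}` and
`φ(2π) - φ(0) = 2πd`. -/
def HasDegree (g : ℂ → ℂ) (d : ℤ) : Prop :=
  ContinuousOn g unitCircle ∧ (∀ z ∈ unitCircle, g z ∈ unitCircle) ∧
    ∃ φ : ℝ → ℝ, ContinuousOn φ (Set.Icc 0 (2 * Real.pi)) ∧
      (∀ θ ∈ Set.Icc 0 (2 * Real.pi),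
        g (Complex.exp (θ * Complex.I)) = Complex.exp (φ θ * Complex.I)) ∧
      φ (2 * Real.pi) - φ 0 = 2 * Real.pi * d

/-- The class `𝓔_d ⊆ W^{1/p,p}(S¹;S¹)` of maps of (VMO-) degree `d`:
maps with values in `S¹` a.e., finite Gagliardo energy, approximable by
continuous degree-`d` circle maps of finite energy both in `L^p` and in the
Gagliardo seminorm. -/
def classE (p : ℝ) (d : ℤ) : Set (ℂ → ℂ) :=
  {f | AEMeasurable f circleMeasure ∧ (∀ᵐ x ∂circleMeasure, ‖f x‖ = 1) ∧
    gEnergy p f ≠ ⊤ ∧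
    ∃ g : ℕ → ℂ → ℂ,
      (∀ k, HasDegree (g k) d ∧ gEnergy p (g k) ≠ ⊤) ∧
      Tendsto (fun k => ∫ x, ‖f x - g k x‖ ^ p ∂circleMeasure) atTop (nhds 0) ∧
      Tendsto (fun k => gSeminorm p (fun x => f x - g k x)) atTop (nhds 0)}

/-- `σ_p(d)`: the minimal `W^{1/p,p}`-seminorm in the class `𝓔_d`. -/
def sigmaP (p : ℝ) (d : ℤ) : ℝ := sInf (gSeminorm p '' classE p d)

/-- `Dist_{W^{1/p,p}}(𝓔_{d₁}, 𝓔_{d₂}) = sup_{f ∈ 𝓔_{d₁}} inf_{g ∈ 𝓔_{d₂}} |f - g|_{W^{1/p,p}}`. -/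
def DistW (p : ℝ) (d1 d2 : ℤ) : ℝ :=
  sSup ((fun f => sInf ((fun g => gSeminorm p (fun x => f x - g x)) '' classE p d2))
    '' classE p d1)

end

/-!
Precomposition with `z ↦ z ^ n` multiplies degrees by `n` and, for `n ≠ 0`, maps `𝓔_d` into
`𝓔_{nd}`. It multiplies the Gagliardo energy by exactly `|n|`, because the power map preserves
arc length and, on the circle, `∑ |w x - y|⁻² = n² |xⁿ - yⁿ|⁻²`, where `w` runs over the `|n|`-th
roots of unity. Every map in `𝓔_d` thus yields a competitor in `𝓔_{nd}` with `|n|` times its energy.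
-/

section

open scoped Real ComplexConjugate

local instance fact_zero_lt_two_pi : Fact (0 < 2 * π) := ⟨Real.two_pi_pos⟩

instance isFiniteMeasure_circleMeasure : IsFiniteMeasure circleMeasure := by
  unfold circleMeasure
  infer_instance

lemma measurePreserving_toCircle :
    MeasurePreserving (fun x : AddCircle (2 * π) => (x.toCircle : ℂ)) volume circleMeasure := by
  have hm : Measurable (fun x : AddCircle (2 * π) => (x.toCircle : ℂ)) :=
    (continuous_subtype_val.comp AddCircle.continuous_toCircle).measurable
  refine ⟨hm, ?_⟩
  rw [← (AddCircle.measurePreserving_mk (2 * π) 0).map_eq,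
    Measure.map_map hm AddCircle.measurable_mk', zero_add, circleMeasure,
    Measure.restrict_congr_set Ico_ae_eq_Ioc]
  congr 1
  ext θ
  simp [AddCircle.toCircle_apply_mk]

lemma measurePreserving_exp_mul_I (t : ℝ) :
    MeasurePreserving (fun θ : ℝ => Complex.exp (θ * Complex.I))
      (volume.restrict (Set.Ioc t (t + 2 * π))) circleMeasure := by
  convert measurePreserving_toCircle.comp (AddCircle.measurePreserving_mk (2 * π) t) using 1
  ext θ
  simp [AddCircle.toCircle_apply_mk]

lemma ae_norm_eq_one : ∀ᵐ z ∂circleMeasure, ‖z‖ = 1 := by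
  rw [← measurePreserving_toCircle.map_eq,
    ae_map_iff measurePreserving_toCircle.aemeasurable (measurableSet_eq_fun (by fun_prop)
      (by fun_prop))]
  exact .of_forall fun x => x.toCircle.norm_coe

lemma ae_prod_norm_eq_one :
    ∀ᵐ q ∂(circleMeasure.prod circleMeasure), ‖q.1‖ = 1 ∧ ‖q.2‖ = 1 :=
  (Measure.quasiMeasurePreserving_fst.ae ae_norm_eq_one).and
    (Measure.quasiMeasurePreserving_snd.ae ae_norm_eq_one)

lemma mem_unitCircle_iff {z : ℂ} : z ∈ unitCircle ↔ ‖z‖ = 1 := mem_sphere_zero_iff_norm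

lemma circleMeasure_restrict_unitCircle : circleMeasure.restrict unitCircle = circleMeasure :=
  Measure.restrict_eq_self_of_ae_mem (ae_norm_eq_one.mono fun _ => mem_unitCircle_iff.2)

lemma measurePreserving_circleMeasure_of_semiconj {F : ℂ → ℂ}
    {T : AddCircle (2 * π) → AddCircle (2 * π)} (hF : Measurable F)
    (hT : MeasurePreserving T volume volume)
    (hFT : ∀ x, F x.toCircle = (T x).toCircle) :
    MeasurePreserving F circleMeasure circleMeasure := by
  refine ⟨hF, ?_⟩
  have hcircle := measurePreserving_toCircle
  calc circleMeasure.map F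
      = volume.map (F ∘ fun x : AddCircle (2 * π) => (x.toCircle : ℂ)) := by
        rw [← hcircle.map_eq, Measure.map_map hF hcircle.measurable]
    _ = volume.map ((fun x : AddCircle (2 * π) => (x.toCircle : ℂ)) ∘ T) := by
        congr 1
        exact funext hFT
    _ = circleMeasure := (hcircle.comp hT).map_eq

lemma measurePreserving_circleMeasure_zpow {n : ℤ} (hn : n ≠ 0) :
    MeasurePreserving (fun z : ℂ => z ^ n) circleMeasure circleMeasure :=
  measurePreserving_circleMeasure_of_semiconj (by fun_prop)
    (Measure.measurePreserving_zsmul volume hn) fun x => by simp [AddCircle.toCircle_zsmul]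

lemma measurePreserving_circleMeasure_mul_left {w : ℂ} (hw : ‖w‖ = 1) :
    MeasurePreserving (fun z : ℂ => w * z) circleMeasure circleMeasure := by
  obtain ⟨a, ha⟩ : ∃ a : AddCircle (2 * π), (a.toCircle : ℂ) = w := by
    refine ⟨(w.arg : ℝ), ?_⟩
    simpa [AddCircle.toCircle_apply_mk, hw] using w.norm_mul_exp_arg_mul_I
  exact measurePreserving_circleMeasure_of_semiconj (by fun_prop)
    (measurePreserving_add_left volume a) fun x => by simp [AddCircle.toCircle_add, ha]

section RootsOfUnity

variable {w : ℂ} {n : ℕ}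

lemma sum_primitiveRoot_pow_mul_conj (hw : IsPrimitiveRoot w n) {k l : ℕ} (hk : k < n)
    (hl : l < n) :
    ∑ j ∈ Finset.range n, (w ^ j) ^ k * conj ((w ^ j) ^ l) = if k = l then (n : ℂ) else 0 := by
  have hn : n ≠ 0 := by lia
  have hw0 : w ≠ 0 := hw.ne_zero hn
  have hconj : conj w = w⁻¹ := (Complex.inv_eq_conj (hw.norm'_eq_one hn)).symm
  have hgeom : ∀ j, (w ^ j) ^ k * conj ((w ^ j) ^ l) = (w ^ k / w ^ l) ^ j := fun j => by
    rw [map_pow, map_pow, hconj, div_pow, div_eq_mul_inv, inv_pow, inv_pow, pow_right_comm w j k,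
      pow_right_comm w j l]
  simp_rw [hgeom]
  split_ifs with hkl
  · simp [hkl, hw0]
  · have hne : w ^ k / w ^ l ≠ 1 := fun h =>
      hkl (hw.pow_inj hk hl ((div_eq_one_iff_eq (pow_ne_zero l hw0)).1 h))
    have hone : (w ^ k / w ^ l) ^ n = 1 := by
      rw [div_pow, pow_right_comm w k n, pow_right_comm w l n, hw.pow_eq_one, one_pow, one_pow,
        div_one]
    rw [geom_sum_eq hne, hone, sub_self, zero_div]

lemma sum_norm_sq_sum_mul_primitiveRoot_pow (hw : IsPrimitiveRoot w n) (a : ℕ → ℂ) :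
    ∑ j ∈ Finset.range n, ‖∑ k ∈ Finset.range n, a k * (w ^ j) ^ k‖ ^ 2 =
      n * ∑ k ∈ Finset.range n, ‖a k‖ ^ 2 := by
  have hsq (z : ℂ) : ((‖z‖ ^ 2 : ℝ) : ℂ) = z * conj z := by
    rw [Complex.mul_conj, Complex.normSq_eq_norm_sq]
  apply Complex.ofReal_injective
  rw [Complex.ofReal_mul, Complex.ofReal_sum, Complex.ofReal_sum, Complex.ofReal_natCast]
  simp_rw [hsq]
  calc ∑ j ∈ Finset.range n, (∑ k ∈ Finset.range n, a k * (w ^ j) ^ k) *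
        conj (∑ l ∈ Finset.range n, a l * (w ^ j) ^ l)
      = ∑ k ∈ Finset.range n, ∑ l ∈ Finset.range n, a k * conj (a l) *
          ∑ j ∈ Finset.range n, (w ^ j) ^ k * conj ((w ^ j) ^ l) := by
        simp_rw [map_sum, Finset.sum_mul_sum, map_mul, Finset.mul_sum]
        rw [Finset.sum_comm]
        refine Finset.sum_congr rfl fun k _ => ?_
        rw [Finset.sum_comm]
        exact Finset.sum_congr rfl fun l _ => Finset.sum_congr rfl fun j _ => by ring
    _ = ∑ k ∈ Finset.range n, ∑ l ∈ Finset.range n,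
          a k * conj (a l) * if k = l then (n : ℂ) else 0 :=
        Finset.sum_congr rfl fun k hk => Finset.sum_congr rfl fun l hl => by
          rw [sum_primitiveRoot_pow_mul_conj hw (Finset.mem_range.1 hk) (Finset.mem_range.1 hl)]
    _ = ∑ k ∈ Finset.range n, n * (a k * conj (a k)) :=
        Finset.sum_congr rfl fun k hk => by
          simp only [mul_ite, mul_zero, Finset.sum_ite_eq, hk, if_true]
          exact mul_comm _ _
    _ = n * ∑ k ∈ Finset.range n, a k * conj (a k) := (Finset.mul_sum ..).symm

/- Since `(w ^ j * x) ^ n = x ^ n`, the quotient `(x ^ n - y ^ n) / (w ^ j * x - y)` is a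
polynomial in `w ^ j` with unimodular coefficients, to which Parseval's identity applies. -/
lemma sum_inv_norm_sq_sub_pow (hw : IsPrimitiveRoot w n) {x y : ℂ} (hx : ‖x‖ = 1) (hy : ‖y‖ = 1)
    (hxy : x ^ n ≠ y ^ n) :
    ∑ j ∈ Finset.range n, (‖w ^ j * x - y‖ ^ 2)⁻¹ = (n : ℝ) ^ 2 / ‖x ^ n - y ^ n‖ ^ 2 := by
  have hparseval : ∑ j ∈ Finset.range n,
      ‖∑ k ∈ Finset.range n, x ^ k * y ^ (n - 1 - k) * (w ^ j) ^ k‖ ^ 2 = (n : ℝ) ^ 2 := by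
    rw [sum_norm_sq_sum_mul_primitiveRoot_pow hw]
    simp [hx, hy, sq]
  rw [← hparseval, Finset.sum_div]
  refine Finset.sum_congr rfl fun j _ => ?_
  have hfactor : (∑ k ∈ Finset.range n, x ^ k * y ^ (n - 1 - k) * (w ^ j) ^ k) *
      (w ^ j * x - y) = x ^ n - y ^ n := by
    have hroot : (w ^ j * x) ^ n = x ^ n := by
      rw [mul_pow, pow_right_comm, hw.pow_eq_one, one_pow, one_mul]
    rw [← hroot, ← geom_sum₂_mul]
    congr 1
    exact Finset.sum_congr rfl fun k _ => by ring
  have hne := sub_ne_zero.2 hxy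
  rw [← hfactor] at hne ⊢
  have hsum := norm_ne_zero_iff.2 (left_ne_zero_of_mul hne)
  have hsub := norm_ne_zero_iff.2 (right_ne_zero_of_mul hne)
  rw [norm_mul]
  field_simp

lemma sum_inv_norm_sq_sub_zpow {n : ℤ} (hw : IsPrimitiveRoot w n.natAbs) {x y : ℂ}
    (hx : ‖x‖ = 1) (hy : ‖y‖ = 1) (hxy : x ^ n ≠ y ^ n) :
    ∑ j ∈ Finset.range n.natAbs, (‖w ^ j * x - y‖ ^ 2)⁻¹ =
      (n.natAbs : ℝ) ^ 2 / ‖x ^ n - y ^ n‖ ^ 2 := by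
  rcases Int.natAbs_eq n with h | h <;> rw [h] at hxy ⊢
  · simp only [zpow_natCast, Int.natAbs_natCast] at hxy ⊢
    exact sum_inv_norm_sq_sub_pow hw hx hy hxy
  · simp only [zpow_neg, zpow_natCast, Int.natAbs_neg, Int.natAbs_natCast, ne_eq, inv_inj]
      at hxy ⊢
    have hx0 : x ≠ 0 := norm_ne_zero_iff.1 (by simp [hx])
    have hy0 : y ≠ 0 := norm_ne_zero_iff.1 (by simp [hy])
    rw [← dist_eq_norm (x ^ _)⁻¹, dist_inv_inv₀ (pow_ne_zero _ hx0) (pow_ne_zero _ hy0),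
      dist_eq_norm, norm_pow, norm_pow, hx, hy, one_pow, mul_one, div_one]
    exact sum_inv_norm_sq_sub_pow hw hx hy hxy

end RootsOfUnity

section Energy

variable {p : ℝ}

lemma gEnergy_eq_lintegral (p : ℝ) (f : ℂ → ℂ) :
    gEnergy p f = ∫⁻ q, ENNReal.ofReal (‖f q.1 - f q.2‖ ^ p / ‖q.1 - q.2‖ ^ 2)
      ∂(circleMeasure.prod circleMeasure) := by
  rw [gEnergy, gEnergyOn, setLIntegral_univ]

lemma gEnergy_congr_ae (p : ℝ) {f g : ℂ → ℂ} (h : f =ᵐ[circleMeasure] g) :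
    gEnergy p f = gEnergy p g := by
  rw [gEnergy_eq_lintegral, gEnergy_eq_lintegral]
  refine lintegral_congr_ae ?_
  filter_upwards [Measure.quasiMeasurePreserving_fst.ae h,
    Measure.quasiMeasurePreserving_snd.ae h] with q hq₁ hq₂
  rw [hq₁, hq₂]

lemma gEnergy_const (hp : p ≠ 0) (c : ℂ) : gEnergy p (fun _ => c) = 0 := by
  simp [gEnergy_eq_lintegral, Real.zero_rpow hp]

lemma gSeminorm_const (hp : p ≠ 0) (c : ℂ) : gSeminorm p (fun _ => c) = 0 := by
  rw [gSeminorm, gEnergy_const hp, ENNReal.toReal_zero, Real.zero_rpow (one_div_ne_zero hp)]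

lemma gSeminorm_nonneg (p : ℝ) (f : ℂ → ℂ) : 0 ≤ gSeminorm p f :=
  Real.rpow_nonneg ENNReal.toReal_nonneg _

lemma gEnergy_eq_lintegral_rotate {f : ℂ → ℂ} (hf : Measurable f) {w : ℂ} (hw : ‖w‖ = 1)
    (hfw : ∀ z, f (w * z) = f z) :
    gEnergy p f = ∫⁻ q, ENNReal.ofReal (‖f q.1 - f q.2‖ ^ p / ‖w * q.1 - q.2‖ ^ 2)
      ∂(circleMeasure.prod circleMeasure) := by
  have hrotate := (measurePreserving_circleMeasure_mul_left hw).prod (.id circleMeasure)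
  rw [gEnergy_eq_lintegral, ← hrotate.lintegral_comp (by fun_prop)]
  simp only [Prod.map_fst, Prod.map_snd, id_eq, hfw]

lemma gEnergy_eq_lintegral_zpow {f : ℂ → ℂ} (hf : Measurable f) {n : ℤ} (hn : n ≠ 0) :
    gEnergy p f = ∫⁻ q, ENNReal.ofReal
      (‖f (q.1 ^ n) - f (q.2 ^ n)‖ ^ p / ‖q.1 ^ n - q.2 ^ n‖ ^ 2)
        ∂(circleMeasure.prod circleMeasure) := by
  have hzpow := measurePreserving_circleMeasure_zpow hn
  rw [gEnergy_eq_lintegral, ← (hzpow.prod hzpow).lintegral_comp (by fun_prop)]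
  rfl

lemma sum_ofReal_rpow_div_norm_sq (hp : p ≠ 0) (f : ℂ → ℂ) {n : ℤ} {w : ℂ}
    (hw : IsPrimitiveRoot w n.natAbs) {x y : ℂ} (hx : ‖x‖ = 1) (hy : ‖y‖ = 1) :
    ∑ j ∈ Finset.range n.natAbs,
        ENNReal.ofReal (‖f (x ^ n) - f (y ^ n)‖ ^ p / ‖w ^ j * x - y‖ ^ 2) =
      (n.natAbs : ℝ≥0∞) ^ 2 *
        ENNReal.ofReal (‖f (x ^ n) - f (y ^ n)‖ ^ p / ‖x ^ n - y ^ n‖ ^ 2) := by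
  rw [← ENNReal.ofReal_sum_of_nonneg fun _ _ => by positivity, ← ENNReal.ofReal_natCast,
    ← ENNReal.ofReal_pow (by positivity), ← ENNReal.ofReal_mul (by positivity)]
  congr 1
  by_cases hxy : x ^ n = y ^ n
  · simp [hxy, Real.zero_rpow hp]
  · simp_rw [div_eq_mul_inv (‖f (x ^ n) - f (y ^ n)‖ ^ p), ← Finset.mul_sum,
      sum_inv_norm_sq_sub_zpow hw hx hy hxy]
    ring

/- Rotating the first variable by an `n`-th root of unity leaves `z ↦ f (z ^ n)` unchanged, so the
kernel may be averaged over these rotations. -/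
lemma gEnergy_comp_zpow_of_measurable (hp : p ≠ 0) {n : ℤ} (hn : n ≠ 0) {f : ℂ → ℂ}
    (hf : Measurable f) : gEnergy p (fun z => f (z ^ n)) = n.natAbs * gEnergy p f := by
  have hN : n.natAbs ≠ 0 := Int.natAbs_ne_zero.2 hn
  obtain ⟨w, hw⟩ : ∃ w : ℂ, IsPrimitiveRoot w n.natAbs := ⟨_, Complex.isPrimitiveRoot_exp _ hN⟩
  have hwn (j : ℕ) : (w ^ j) ^ n = 1 := by
    rw [← zpow_natCast, zpow_comm, (hw.zpow_eq_one_iff_dvd n).2 Int.natAbs_dvd_self, one_zpow]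
  have hrotate (j : ℕ) := gEnergy_eq_lintegral_rotate (p := p) (f := fun z => f (z ^ n))
    (by fun_prop) (w := w ^ j) (by rw [norm_pow, hw.norm'_eq_one hN, one_pow])
    (fun z => by rw [mul_zpow, hwn, one_mul])
  refine (ENNReal.mul_right_inj (a := n.natAbs) (by exact_mod_cast hN)
    (ENNReal.natCast_ne_top _)).1 ?_
  calc (n.natAbs : ℝ≥0∞) * gEnergy p (fun z => f (z ^ n))
      = ∑ j ∈ Finset.range n.natAbs, ∫⁻ q, ENNReal.ofReal
          (‖f (q.1 ^ n) - f (q.2 ^ n)‖ ^ p / ‖w ^ j * q.1 - q.2‖ ^ 2)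
            ∂(circleMeasure.prod circleMeasure) := by
        simp_rw [← hrotate, Finset.sum_const, Finset.card_range, nsmul_eq_mul]
    _ = ∫⁻ q, ∑ j ∈ Finset.range n.natAbs, ENNReal.ofReal
          (‖f (q.1 ^ n) - f (q.2 ^ n)‖ ^ p / ‖w ^ j * q.1 - q.2‖ ^ 2)
            ∂(circleMeasure.prod circleMeasure) :=
        (lintegral_finsetSum _ fun _ _ => by fun_prop).symm
    _ = ∫⁻ q, (n.natAbs : ℝ≥0∞) ^ 2 * ENNReal.ofReal
          (‖f (q.1 ^ n) - f (q.2 ^ n)‖ ^ p / ‖q.1 ^ n - q.2 ^ n‖ ^ 2)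
            ∂(circleMeasure.prod circleMeasure) :=
        lintegral_congr_ae <| ae_prod_norm_eq_one.mono fun q hq =>
          sum_ofReal_rpow_div_norm_sq hp f hw hq.1 hq.2
    _ = n.natAbs * (n.natAbs * gEnergy p f) := by
        rw [lintegral_const_mul _ (by fun_prop), ← gEnergy_eq_lintegral_zpow hf hn, sq, mul_assoc]

lemma gEnergy_comp_zpow (hp : p ≠ 0) (n : ℤ) {f : ℂ → ℂ} (hf : AEMeasurable f circleMeasure) :
    gEnergy p (fun z => f (z ^ n)) = n.natAbs * gEnergy p f := by
  rcases eq_or_ne n 0 with rfl | hn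
  · simp [gEnergy_const hp]
  · have hcomp := (measurePreserving_circleMeasure_zpow hn).quasiMeasurePreserving.ae_eq
      hf.ae_eq_mk
    rw [gEnergy_congr_ae p hf.ae_eq_mk,
      ← gEnergy_comp_zpow_of_measurable hp hn hf.measurable_mk]
    exact gEnergy_congr_ae p hcomp

lemma gSeminorm_comp_zpow (hp : p ≠ 0) (n : ℤ) {f : ℂ → ℂ} (hf : AEMeasurable f circleMeasure) :
    gSeminorm p (fun z => f (z ^ n)) = |(n : ℝ)| ^ (1 / p) * gSeminorm p f := by
  rw [gSeminorm, gEnergy_comp_zpow hp n hf, ENNReal.toReal_mul, ENNReal.toReal_natCast,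
    Real.mul_rpow n.natAbs.cast_nonneg ENNReal.toReal_nonneg, Nat.cast_natAbs, Int.cast_abs,
    gSeminorm]

lemma two_div_pi_mul_abs_le_norm_one_sub_exp {t : ℝ} (ht : |t| ≤ π) :
    2 / π * |t| ≤ ‖1 - Complex.exp (t * Complex.I)‖ := by
  have hsin := Real.mul_abs_le_abs_sin (x := t / 2) (by rw [abs_div, abs_two]; linarith)
  rw [norm_sub_rev, mul_comm (t : ℂ), Complex.norm_exp_I_mul_ofReal_sub_one, norm_mul,
    Real.norm_ofNat, Real.norm_eq_abs]
  rw [abs_div, abs_two] at hsin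
  linarith

lemma norm_one_sub_exp_rpow_div_sq_le (hp : 0 < p) {t : ℝ} (ht : |t| ≤ π) :
    ‖1 - Complex.exp (t * Complex.I)‖ ^ p / ‖1 - Complex.exp (t * Complex.I)‖ ^ 2 ≤
      (π / 2) ^ 2 * |t| ^ (p - 2) := by
  rcases eq_or_ne t 0 with rfl | ht0
  · simpa [Real.zero_rpow hp.ne'] using by positivity
  have htpos : 0 < |t| := abs_pos.2 ht0
  have hlower := two_div_pi_mul_abs_le_norm_one_sub_exp ht
  have hupper : ‖1 - Complex.exp (t * Complex.I)‖ ≤ |t| := by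
    rw [norm_sub_rev, mul_comm (t : ℂ)]
    exact Real.norm_exp_I_mul_ofReal_sub_one_le
  calc ‖1 - Complex.exp (t * Complex.I)‖ ^ p / ‖1 - Complex.exp (t * Complex.I)‖ ^ 2
      ≤ |t| ^ p / (2 / π * |t|) ^ 2 := by gcongr
    _ = (π / 2) ^ 2 * |t| ^ (p - 2) := by
      rw [Real.rpow_sub htpos, Real.rpow_two]
      field_simp

lemma lintegral_norm_one_sub_rpow_div_sq_lt_top (hp : 1 < p) :
    ∫⁻ z, ENNReal.ofReal (‖1 - z‖ ^ p / ‖1 - z‖ ^ 2) ∂circleMeasure < ⊤ := by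
  have hball : (Set.Ioc (-π) (-π + 2 * π) : Set ℝ) =ᵐ[volume] Metric.ball 0 π := by
    rw [Real.ball_eq_Ioo, show -π + 2 * π = π by ring, zero_sub, zero_add]
    exact Ioo_ae_eq_Ioc.symm
  rw [← (measurePreserving_exp_mul_I (-π)).lintegral_comp (by fun_prop),
    Measure.restrict_congr_set hball]
  refine (integrableOn_ball_of_norm_le_rpow (α := 2 - p) (C := (π / 2) ^ 2) (by simp)
    (by simpa using by linarith) ?_
    (Measurable.aestronglyMeasurable (by fun_prop))).lintegral_lt_top
  filter_upwards [ae_restrict_mem Metric.isOpen_ball.measurableSet] with t ht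
  rw [Real.norm_of_nonneg (by positivity), neg_sub]
  exact norm_one_sub_exp_rpow_div_sq_le (by linarith) (mem_ball_zero_iff.1 ht).le

lemma gEnergy_id_ne_top (hp : 1 < p) : gEnergy p (fun z => z) ≠ ⊤ := by
  rw [gEnergy_eq_lintegral, lintegral_prod _ (by fun_prop)]
  have hrotate : ∀ᵐ x ∂circleMeasure,
      ∫⁻ y, ENNReal.ofReal (‖x - y‖ ^ p / ‖x - y‖ ^ 2) ∂circleMeasure =
        ∫⁻ z, ENNReal.ofReal (‖1 - z‖ ^ p / ‖1 - z‖ ^ 2) ∂circleMeasure := by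
    filter_upwards [ae_norm_eq_one] with x hx
    have hdist (z : ℂ) : ‖x - x * z‖ = ‖1 - z‖ := by
      rw [← mul_one_sub, norm_mul, hx, one_mul]
    rw [← (measurePreserving_circleMeasure_mul_left hx).lintegral_comp (by fun_prop)]
    simp only [hdist]
  rw [lintegral_congr_ae hrotate, lintegral_const]
  exact ENNReal.mul_ne_top (lintegral_norm_one_sub_rpow_div_sq_lt_top hp).ne (measure_ne_top _ _)

end Energy

section Degree

variable {g : ℂ → ℂ} {d : ℤ}

lemma HasDegree.norm_eq_one (h : HasDegree g d) {z : ℂ} (hz : ‖z‖ = 1) : ‖g z‖ = 1 :=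
  mem_unitCircle_iff.1 (h.2.1 z (mem_unitCircle_iff.2 hz))

lemma HasDegree.aemeasurable (h : HasDegree g d) : AEMeasurable g circleMeasure := by
  rw [← circleMeasure_restrict_unitCircle]
  exact h.1.aemeasurable Metric.isClosed_sphere.measurableSet

/- The linear part `d * t` accounts for the whole increment of the lift over one turn, so the
remainder extends periodically. -/
lemma HasDegree.exists_continuous_lift (h : HasDegree g d) :
    ∃ ψ : ℝ → ℝ, Continuous ψ ∧ Function.Periodic (fun t => ψ t - d * t) (2 * π) ∧
      ∀ t : ℝ, g (Complex.exp (t * Complex.I)) = Complex.exp (ψ t * Complex.I) := by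
  obtain ⟨-, -, φ, hφ, hlift, hd⟩ := h
  set u : AddCircle (2 * π) → ℝ := AddCircle.liftIco (2 * π) 0 fun t => φ t - d * t with hu
  have hu_cont : Continuous u :=
    AddCircle.liftIco_zero_continuous (by linarith) (hφ.sub (by fun_prop))
  refine ⟨fun t => u t + d * t, ?_, fun t => ?_, fun t => ?_⟩
  · exact (hu_cont.comp (AddCircle.continuous_mk' _)).add (by fun_prop)
  · simp
  · have hperiodic : Function.Periodic (fun t : ℝ => g (Complex.exp (t * Complex.I)) -
        Complex.exp ((u t + d * t : ℝ) * Complex.I)) (2 * π) := fun s => by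
      have hexp : Complex.exp ((u (s + 2 * π : ℝ) + d * (s + 2 * π) : ℝ) * Complex.I) =
          Complex.exp ((u s + d * s : ℝ) * Complex.I) := by
        rw [AddCircle.coe_add_period, Complex.exp_eq_exp_iff_exists_int]
        exact ⟨d, by push_cast; ring⟩
      have hturn : Complex.exp ((s + 2 * π : ℝ) * Complex.I) = Complex.exp (s * Complex.I) := by
        rw [Complex.exp_eq_exp_iff_exists_int]
        exact ⟨1, by push_cast; ring⟩
      simp only [hexp, hturn]
    obtain ⟨θ, hθ, hθt⟩ := hperiodic.exists_mem_Ico₀ Real.two_pi_pos t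
    rw [← sub_eq_zero, hθt, hlift θ (Set.Ico_subset_Icc_self hθ), hu,
      AddCircle.liftIco_zero_coe_apply hθ, sub_add_cancel, sub_self]

lemma HasDegree.comp_zpow (h : HasDegree g d) (n : ℤ) :
    HasDegree (fun z => g (z ^ n)) (n * d) := by
  obtain ⟨ψ, hψ, hperiodic, hlift⟩ := h.exists_continuous_lift
  have hmaps : Set.MapsTo (fun z : ℂ => z ^ n) unitCircle unitCircle := fun z hz => by
    simp_all [mem_unitCircle_iff]
  have hcont : ContinuousOn (fun z : ℂ => z ^ n) unitCircle :=
    continuousOn_id.zpow₀ n fun z hz => .inl <| norm_ne_zero_iff.1 <| by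
      simp [mem_unitCircle_iff.1 hz]
  refine ⟨h.1.comp hcont hmaps, fun z hz => h.2.1 _ (hmaps hz), fun t => ψ (n * t),
    by fun_prop, fun θ _ => ?_, ?_⟩
  · have hpow : Complex.exp (θ * Complex.I) ^ n = Complex.exp ((n * θ : ℝ) * Complex.I) := by
      rw [← Complex.exp_int_mul]
      push_cast
      ring_nf
    simp only [hpow, hlift]
  · have hincrement := hperiodic.int_mul_eq n
    push_cast
    simp only [mul_zero] at hincrement ⊢
    linear_combination hincrement

lemma hasDegree_id : HasDegree (fun z => z) 1 :=
  ⟨continuousOn_id, fun _ hz => hz, fun t => t, continuousOn_id, fun _ _ => rfl, by simp⟩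

lemma hasDegree_const {c : ℂ} (hc : ‖c‖ = 1) : HasDegree (fun _ => c) 0 := by
  refine ⟨continuousOn_const, fun _ _ => mem_unitCircle_iff.2 hc, fun _ => c.arg,
    continuousOn_const, fun _ _ => ?_, by simp⟩
  simpa [hc] using c.norm_mul_exp_arg_mul_I.symm

lemma hasDegree_zpow (d : ℤ) : HasDegree (fun z => z ^ d) d := by
  simpa using hasDegree_id.comp_zpow d

end Degree

section Minimization

variable {p : ℝ} {d : ℤ}

lemma HasDegree.mem_classE (hp : p ≠ 0) {g : ℂ → ℂ} (h : HasDegree g d)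
    (henergy : gEnergy p g ≠ ⊤) : g ∈ classE p d := by
  refine ⟨h.aemeasurable, ae_norm_eq_one.mono fun z hz => h.norm_eq_one hz, henergy, fun _ => g,
    fun _ => ⟨h, henergy⟩, ?_, ?_⟩
  · simp [Real.zero_rpow hp]
  · simp [gSeminorm_const hp]

lemma zpow_mem_classE (hp : 1 < p) (d : ℤ) : (fun z => z ^ d) ∈ classE p d := by
  have hp0 : p ≠ 0 := by linarith
  refine (hasDegree_zpow d).mem_classE hp0 ?_
  rw [gEnergy_comp_zpow hp0 d aemeasurable_id']
  exact ENNReal.mul_ne_top (ENNReal.natCast_ne_top _) (gEnergy_id_ne_top hp)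

lemma comp_zpow_mem_classE (hp : p ≠ 0) {n : ℤ} (hn : n ≠ 0) {f : ℂ → ℂ} (hf : f ∈ classE p d) :
    (fun z => f (z ^ n)) ∈ classE p (n * d) := by
  obtain ⟨hmeas, hnorm, henergy, g, hg, hLp, hseminorm⟩ := hf
  have hzpow := measurePreserving_circleMeasure_zpow hn
  have hsub (k : ℕ) : AEMeasurable (fun z => f z - g k z) circleMeasure :=
    hmeas.sub (hg k).1.aemeasurable
  refine ⟨hmeas.comp_quasiMeasurePreserving hzpow.quasiMeasurePreserving,
    hzpow.quasiMeasurePreserving.ae hnorm, ?_, fun k z => g k (z ^ n),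
    fun k => ⟨(hg k).1.comp_zpow n, ?_⟩, ?_, ?_⟩
  · rw [gEnergy_comp_zpow hp n hmeas]
    exact ENNReal.mul_ne_top (ENNReal.natCast_ne_top _) henergy
  · rw [gEnergy_comp_zpow hp n (hg k).1.aemeasurable]
    exact ENNReal.mul_ne_top (ENNReal.natCast_ne_top _) (hg k).2
  · refine hLp.congr fun k => ?_
    conv_lhs => rw [← hzpow.map_eq]
    refine integral_map hzpow.aemeasurable ?_
    rw [hzpow.map_eq]
    exact ((hsub k).norm.pow_const p).aestronglyMeasurable
  · have hscaled := hseminorm.const_mul (|(n : ℝ)| ^ (1 / p))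
    rw [mul_zero] at hscaled
    exact hscaled.congr fun k => (gSeminorm_comp_zpow hp n (hsub k)).symm

lemma sigmaP_nonneg (p : ℝ) (d : ℤ) : 0 ≤ sigmaP p d := by
  apply Real.sInf_nonneg
  rintro _ ⟨f, -, rfl⟩
  exact gSeminorm_nonneg p f

lemma sigmaP_le {f : ℂ → ℂ} (hf : f ∈ classE p d) : sigmaP p d ≤ gSeminorm p f :=
  csInf_le ⟨0, by rintro _ ⟨f, -, rfl⟩; exact gSeminorm_nonneg p f⟩ ⟨f, hf, rfl⟩

lemma sigmaP_zero (hp : p ≠ 0) : sigmaP p 0 = 0 := by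
  have hmem := (hasDegree_const norm_one).mem_classE hp (by simp [gEnergy_const hp])
  exact le_antisymm (gSeminorm_const hp 1 ▸ sigmaP_le hmem) (sigmaP_nonneg p 0)

lemma sigmaP_mul_le (hp : 1 < p) (n d : ℤ) :
    sigmaP p (n * d) ≤ |(n : ℝ)| ^ (1 / p) * sigmaP p d := by
  have hp0 : p ≠ 0 := by linarith
  rcases eq_or_ne n 0 with rfl | hn
  · simp [sigmaP_zero hp0, hp0]
  have hpos : 0 < |(n : ℝ)| ^ (1 / p) := by positivity
  rw [← div_le_iff₀' hpos]
  refine le_csInf ⟨_, _, zpow_mem_classE hp d, rfl⟩ ?_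
  rintro _ ⟨f, hf, rfl⟩
  rw [div_le_iff₀' hpos, ← gSeminorm_comp_zpow hp0 n hf.1]
  exact sigmaP_le (comp_zpow_mem_classE hp0 hn hf)

end Minimization

end

theorem sigma_pow_le_general (p : ℝ) (hp : 1 < p) (n d : ℤ) :
    sigmaP p (n * d) ^ p ≤ (|n| : ℝ) * sigmaP p d ^ p :=
  calc sigmaP p (n * d) ^ p
      ≤ (|(n : ℝ)| ^ (1 / p) * sigmaP p d) ^ p :=
        Real.rpow_le_rpow (sigmaP_nonneg p _) (sigmaP_mul_le hp n d) (by linarith)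
    _ = |(n : ℝ)| * sigmaP p d ^ p := by
        rw [Real.mul_rpow (by positivity) (sigmaP_nonneg p d), ← Real.rpow_mul (abs_nonneg _),
          one_div_mul_cancel (by linarith), Real.rpow_one]

/-- **Remark 1.3.** `σ_p^p(d) ≤ |d| σ_p^p(1)` for every `d ∈ ℤ`. -/
theorem sigma_pow_le (p : ℝ) (hp : 1 < p) (d : ℤ) :
    sigmaP p d ^ p ≤ (|d| : ℝ) * sigmaP p 1 ^ p := by
  simpa using sigma_pow_le_general p hp d 1
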